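/- Let p, q be coprime positive integers and let B(p,q) ⊆ A be the ℂ-linear span of the images of the monomials x^i y^j u^k v^ℓ with p(i − ℓ) + q(j − k) ≥ 0. Then for every ν ∈ ℕ the set m_ν(B(p,q)) := D^ν(B(p,q) ∩ ker D^{ν+1}) equals the ℂ-linear span of the monomials x^α y^β with pα + qβ ≥ (p+q)ν. (This is part (2) of the main theorem: the affine extension P̂(p,q) of SL₂ satisfies m_ν(P̂(p,q)) = ⊕_{pα+qβ ≥ (p+q)ν} ℂ x^α y^β.) -/

import Mathlib

/-!
Give `x, y, u, v` the weights `p, q, -q, -p`; the relation `xv - yu = 1` is homogeneous of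
weight `0`, and `D` raises the weight by `p + q` while lowering the degree in `u, v` by one.
A monomial `x^i y^j u^k v^l` with `k + l = N` is sent by `D^N` to `N! x^(i+k) y^(j+l)`, and one
with `k + l < N` is sent to `0`.

The inclusion `⊇` is then explicit: if `pα + qβ ≥ (p+q)ν` then `α + β ≥ ν`, so `x^α y^β` is
up to the factor `ν!` the image of a monomial with `k + l = ν`, which has weight
`pα + qβ - (p+q)ν ≥ 0`.

For `⊆`, the point is that `c ∈ B(p,q)` with `D^(ν+1) c = 0` is a combination of monomials of
`B(p,q)` of degree at most `ν` in `u, v` (`mem_Gpq_of_iterate_eq_zero`, applied repeatedly).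
Modulo lower degree, the relation allows `xv` to be exchanged for `yu` without changing the
weight (`sMon_sub_mem`), so a monomial of degree `N` in `u, v` depends only on
`(i + k, j + l)`; since `x` and `y` are algebraically independent (`aeval_xy_injective`),
`D^N` detects the class of an element of degree `N` modulo lower degree.
-/

open MvPolynomial

noncomputable section

/-- The ideal `⟨XV − YU − 1⟩` of `ℂ[X, Y, U, V]` (with `X = X 0`, `Y = X 1`, `U = X 2`,
`V = X 3`). -/
def sl2Ideal : Ideal (MvPolynomial (Fin 4) ℂ) :=
  Ideal.span {X 0 * X 3 - X 1 * X 2 - 1}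

/-- The coordinate ring `A = ℂ[X,Y,U,V]/⟨XV − YU − 1⟩` of `SL₂` over `ℂ`. -/
abbrev SL2R : Type := MvPolynomial (Fin 4) ℂ ⧸ sl2Ideal

/-- `x`, the image of `X` in `A`. -/
def sx : SL2R := Ideal.Quotient.mk sl2Ideal (X 0)
/-- `y`, the image of `Y` in `A`. -/
def sy : SL2R := Ideal.Quotient.mk sl2Ideal (X 1)
/-- `u`, the image of `U` in `A`. -/
def su : SL2R := Ideal.Quotient.mk sl2Ideal (X 2)
/-- `v`, the image of `V` in `A`. -/
def sv : SL2R := Ideal.Quotient.mk sl2Ideal (X 3)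

/-- The ℂ-linear span `B(p,q) ⊆ A` of the monomials `x^i y^j u^k v^ℓ` with
`p(i − ℓ) + q(j − k) ≥ 0`; it is the coordinate ring of the affine extension `P̂(p,q)`
of `SL₂`. -/
def Bpq (p q : ℕ) : Submodule ℂ SL2R :=
  Submodule.span ℂ {a : SL2R | ∃ i j k l : ℕ,
    0 ≤ (p : ℤ) * ((i : ℤ) - (l : ℤ)) + (q : ℤ) * ((j : ℤ) - (k : ℤ)) ∧
    a = sx ^ i * sy ^ j * su ^ k * sv ^ l}

/-! ### Monomials and the filtration by degree in `u, v` -/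

/-- The monomial `x^i y^j u^k v^l` of `A`. -/
def sMon (i j k l : ℕ) : SL2R := sx ^ i * sy ^ j * su ^ k * sv ^ l

/-- The span of the monomials of `B(p,q)` whose total degree `k + l` in `u, v` is less
than `N`. The strict inequality makes `Gpq p q 0 = ⊥`. -/
def Gpq (p q N : ℕ) : Submodule ℂ SL2R :=
  Submodule.span ℂ {a : SL2R | ∃ i j k l : ℕ,
    0 ≤ (p : ℤ) * ((i : ℤ) - (l : ℤ)) + (q : ℤ) * ((j : ℤ) - (k : ℤ)) ∧ k + l < N ∧
    a = sMon i j k l}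

/-- The normal form, modulo lower degree in `u, v`, of a monomial of degree `N` in `u, v`
that `D^N` maps to a multiple of `x^a y^b`: the one with the largest exponent of `u`.
Meaningful only for `N ≤ a + b`; otherwise the truncated subtraction gives a junk value. -/
def sNorm (N a b : ℕ) : SL2R :=
  sMon (a - min a N) (b - (N - min a N)) (min a N) (N - min a N)

/-! ### Algebraic independence of `x` and `y` -/

lemma sl2_rel : sx * sv - sy * su = 1 := by
  have h : (Ideal.Quotient.mk sl2Ideal) (X 0 * X 3 - X 1 * X 2 - 1) = 0 :=
    Ideal.Quotient.eq_zero_iff_mem.2 (Ideal.subset_span rfl)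
  rw [map_sub, map_sub, map_mul, map_mul, map_one, sub_eq_zero] at h
  exact h

/-- `x` and `y` are algebraically independent in `A`: the point `u = 0`, `v = 1/x` of `SL₂`
over `ℂ(x, y)` gives a map `A → ℂ(x, y)` under which they become the two variables. -/
lemma aeval_xy_injective :
    Function.Injective (aeval ![sx, sy] : MvPolynomial (Fin 2) ℂ →ₐ[ℂ] SL2R) := by
  let K := FractionRing (MvPolynomial (Fin 2) ℂ)
  let ι : MvPolynomial (Fin 2) ℂ →ₐ[ℂ] K := IsScalarTower.toAlgHom ℂ _ K
  have hι : Function.Injective ι := IsFractionRing.injective (MvPolynomial (Fin 2) ℂ) K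
  have h0 : ι (X 0) ≠ 0 := by
    rw [Ne, map_eq_zero_iff ι hι]
    exact X_ne_zero 0
  let f : MvPolynomial (Fin 4) ℂ →ₐ[ℂ] K := aeval ![ι (X 0), ι (X 1), 0, (ι (X 0))⁻¹]
  have hf : ∀ a ∈ sl2Ideal, f a = 0 := by
    intro a ha
    have hle : sl2Ideal ≤ RingHom.ker f := by
      rw [sl2Ideal, Ideal.span_le, Set.singleton_subset_iff]
      simp [f, RingHom.mem_ker, mul_inv_cancel₀ h0]
    exact hle ha
  let F : SL2R →ₐ[ℂ] K := Ideal.Quotient.liftₐ sl2Ideal f hf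
  have hFx : F sx = ι (X 0) := by
    change f (X 0) = _
    simp [f]
  have hFy : F sy = ι (X 1) := by
    change f (X 1) = _
    simp [f]
  have hcomp : F.comp (aeval ![sx, sy]) = ι := by
    apply MvPolynomial.algHom_ext
    intro i
    fin_cases i
    · simpa using hFx
    · simpa using hFy
  have : Function.Injective (F ∘ (aeval ![sx, sy] : MvPolynomial (Fin 2) ℂ →ₐ[ℂ] SL2R)) := by
    have h2 : (F ∘ (aeval ![sx, sy] : MvPolynomial (Fin 2) ℂ →ₐ[ℂ] SL2R)) = ι := by
      rw [← hcomp]; rfl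
    rw [h2]; exact hι
  exact this.of_comp

/-! ### Iterates of `D` on monomials -/

section Derivation

variable (D : Derivation ℂ SL2R SL2R)

lemma D_sMon (hx : D sx = 0) (hy : D sy = 0) (hu : D su = sx) (hv : D sv = sy)
    (i j k l : ℕ) :
    D (sMon i j k l) = (k : ℂ) • sMon (i + 1) j (k - 1) l + (l : ℂ) • sMon i (j + 1) k (l - 1) := by
  simp only [sMon, Derivation.leibniz, Derivation.leibniz_pow, hx, hy, hu, hv, smul_eq_mul,
    Nat.cast_smul_eq_nsmul, nsmul_eq_mul]
  ring

lemma iterate_D_eq (N : ℕ) (c : SL2R) :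
    (⇑D)^[N] c = ((D : SL2R →ₗ[ℂ] SL2R) ^ N) c := by
  rw [Module.End.pow_apply]; rfl

/-- `D` strictly lowers the degree in `u, v`. -/
lemma iterate_D_sMon_lt (hx : D sx = 0) (hy : D sy = 0) (hu : D su = sx) (hv : D sv = sy)
    (N : ℕ) : ∀ i j k l : ℕ, k + l < N → ((D : SL2R →ₗ[ℂ] SL2R) ^ N) (sMon i j k l) = 0 := by
  induction N with
  | zero => intro i j k l h; omega
  | succ N ih =>
    intro i j k l h
    rw [pow_succ, Module.End.mul_apply, Derivation.coeFn_coe, D_sMon D hx hy hu hv, map_add,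
      map_smul, map_smul]
    have h1 : (k : ℂ) • ((D : SL2R →ₗ[ℂ] SL2R) ^ N) (sMon (i + 1) j (k - 1) l) = 0 := by
      rcases k with _ | k
      · simp
      · rw [ih _ _ _ _ (by omega), smul_zero]
    have h2 : (l : ℂ) • ((D : SL2R →ₗ[ℂ] SL2R) ^ N) (sMon i (j + 1) k (l - 1)) = 0 := by
      rcases l with _ | l
      · simp
      · rw [ih _ _ _ _ (by omega), smul_zero]
    rw [h1, h2, add_zero]

lemma iterate_D_sMon_eq (hx : D sx = 0) (hy : D sy = 0) (hu : D su = sx) (hv : D sv = sy)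
    (N : ℕ) : ∀ i j k l : ℕ, k + l = N → ((D : SL2R →ₗ[ℂ] SL2R) ^ N) (sMon i j k l) =
      (N.factorial : ℂ) • (sx ^ (i + k) * sy ^ (j + l)) := by
  induction N with
  | zero =>
    intro i j k l h
    obtain ⟨rfl, rfl⟩ : k = 0 ∧ l = 0 := by omega
    simp [sMon]
  | succ N ih =>
    intro i j k l h
    rw [pow_succ, Module.End.mul_apply, Derivation.coeFn_coe, D_sMon D hx hy hu hv, map_add,
      map_smul, map_smul]
    have h1 : (k : ℂ) • ((D : SL2R →ₗ[ℂ] SL2R) ^ N) (sMon (i + 1) j (k - 1) l) =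
        (k : ℂ) • (N.factorial : ℂ) • (sx ^ (i + k) * sy ^ (j + l)) := by
      rcases k with _ | k
      · simp
      · rw [ih _ _ _ _ (by omega), show i + 1 + (k + 1 - 1) = i + (k + 1) by omega]
    have h2 : (l : ℂ) • ((D : SL2R →ₗ[ℂ] SL2R) ^ N) (sMon i (j + 1) k (l - 1)) =
        (l : ℂ) • (N.factorial : ℂ) • (sx ^ (i + k) * sy ^ (j + l)) := by
      rcases l with _ | l
      · simp
      · rw [ih _ _ _ _ (by omega), show j + 1 + (l + 1 - 1) = j + (l + 1) by omega]
    rw [h1, h2, ← add_smul, smul_smul, Nat.factorial_succ, ← h]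
    push_cast
    rfl

end Derivation

/-! ### Exchanging `xv` for `yu` -/

lemma Gpq_mono (p q : ℕ) {M N : ℕ} (h : M ≤ N) : Gpq p q M ≤ Gpq p q N := by
  apply Submodule.span_mono
  rintro a ⟨i, j, k, l, hw, hd, rfl⟩
  exact ⟨i, j, k, l, hw, by omega, rfl⟩

lemma exists_mem_Gpq {p q : ℕ} {c : SL2R} (hc : c ∈ Bpq p q) : ∃ N, c ∈ Gpq p q N := by
  induction hc using Submodule.span_induction with
  | mem a ha =>
    obtain ⟨i, j, k, l, hw, rfl⟩ := ha
    exact ⟨k + l + 1, Submodule.subset_span ⟨i, j, k, l, hw, by omega, rfl⟩⟩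
  | zero => exact ⟨0, zero_mem _⟩
  | add a b _ _ ha hb =>
    obtain ⟨M, hM⟩ := ha
    obtain ⟨N, hN⟩ := hb
    exact ⟨max M N, add_mem (Gpq_mono p q (le_max_left _ _) hM)
      (Gpq_mono p q (le_max_right _ _) hN)⟩
  | smul r a _ ha =>
    obtain ⟨M, hM⟩ := ha
    exact ⟨M, Submodule.smul_mem _ _ hM⟩

/-- Since `xv = yu + 1`, a factor `(xv)^n` may be traded for `(yu)^n` modulo monomials of
the same weight and lower degree in `u, v`. -/
lemma sMon_sub_mem (p q : ℕ) (n : ℕ) : ∀ i j k l : ℕ,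
    0 ≤ (p : ℤ) * ((i : ℤ) - (l : ℤ)) + (q : ℤ) * ((j : ℤ) - (k : ℤ)) →
    sMon (i + n) j k (l + n) - sMon i (j + n) (k + n) l ∈ Gpq p q (k + l + n) := by
  induction n with
  | zero => intro i j k l _; simp
  | succ n ih =>
    intro i j k l hw
    have h1 := ih (i + 1) j k (l + 1) (by push_cast; linarith)
    have h2 : sMon i (j + n) (k + n) l ∈ Gpq p q (k + l + (n + 1)) :=
      Submodule.subset_span ⟨i, j + n, k + n, l, by push_cast; linarith, by omega, rfl⟩
    have h3 : sMon (i + (n + 1)) j k (l + (n + 1)) - sMon i (j + (n + 1)) (k + (n + 1)) l =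
        (sMon (i + 1 + n) j k (l + 1 + n) - sMon (i + 1) (j + n) (k + n) (l + 1)) +
          sMon i (j + n) (k + n) l := by
      simp only [sMon]
      linear_combination (sx ^ i * sy ^ (j + n) * su ^ (k + n) * sv ^ l) * sl2_rel
    rw [h3]
    exact add_mem (Gpq_mono p q (by omega) h1) h2

lemma sMon_sub_sNorm_mem (p q : ℕ) (i j k l : ℕ)
    (hw : 0 ≤ (p : ℤ) * ((i : ℤ) - (l : ℤ)) + (q : ℤ) * ((j : ℤ) - (k : ℤ))) :
    sMon i j k l - sNorm (k + l) (i + k) (j + l) ∈ Gpq p q (k + l) := by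
  -- `u` can absorb as many factors as are available in both `x^i` and `v^l`.
  obtain ⟨n, i', l', rfl, rfl, h0⟩ : ∃ n i' l', i = i' + n ∧ l = l' + n ∧ (i' = 0 ∨ l' = 0) :=
    ⟨min i l, i - min i l, l - min i l, by omega, by omega, by omega⟩
  have h := sMon_sub_mem p q n i' j k l' (by push_cast at hw; linarith)
  have e : sNorm (k + (l' + n)) (i' + n + k) (j + (l' + n)) = sMon i' (j + n) (k + n) l' := by
    unfold sNorm
    have hm : min (i' + n + k) (k + (l' + n)) = k + n := by omega
    rw [hm]
    congr 1 <;> omega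
  rw [e, ← add_assoc]
  exact h

/-! ### Descent of the degree in `u, v` by the kernels of powers of `D` -/

/-- The linear map from `ℂ[X, Y]` to `A` sending `X^a Y^b` to `sNorm N a b`. -/
def sNormMap (N : ℕ) : MvPolynomial (Fin 2) ℂ →ₗ[ℂ] SL2R :=
  (basisMonomials (Fin 2) ℂ).constr ℂ (fun m => sNorm N (m 0) (m 1))

/-- The key step: an element of degree at most `N` in `u, v` killed by `D^N` has degree less
than `N`, by an expression that stays inside `B(p,q)`. Modulo lower degree the element is the
normal form of some `g ∈ ℂ[X, Y]`, and `D^N` recovers `N! g(x, y)`. -/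
lemma mem_Gpq_of_iterate_eq_zero (D : Derivation ℂ SL2R SL2R)
    (hx : D sx = 0) (hy : D sy = 0) (hu : D su = sx) (hv : D sv = sy)
    {p q N : ℕ} {c : SL2R} (hc : c ∈ Gpq p q (N + 1))
    (h0 : ((D : SL2R →ₗ[ℂ] SL2R) ^ N) c = 0) : c ∈ Gpq p q N := by
  have key : ∃ g : MvPolynomial (Fin 2) ℂ, c - sNormMap N g ∈ Gpq p q N ∧
      ((D : SL2R →ₗ[ℂ] SL2R) ^ N) c = (N.factorial : ℂ) • aeval ![sx, sy] g := by
    clear h0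
    induction hc using Submodule.span_induction with
    | mem a ha =>
      obtain ⟨i, j, k, l, hw, hd, rfl⟩ := ha
      rcases Nat.lt_succ_iff_lt_or_eq.1 hd with hlt | rfl
      · refine ⟨0, ?_, ?_⟩
        · rw [map_zero, sub_zero]
          exact Submodule.subset_span ⟨i, j, k, l, hw, hlt, rfl⟩
        · rw [iterate_D_sMon_lt D hx hy hu hv N _ _ _ _ hlt, map_zero, smul_zero]
      · refine ⟨monomial (Finsupp.single 0 (i + k) + Finsupp.single 1 (j + l)) 1, ?_, ?_⟩
        · have e : sNormMap (k + l)
              (monomial (Finsupp.single 0 (i + k) + Finsupp.single 1 (j + l)) 1) =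
              sNorm (k + l) (i + k) (j + l) := by
            have hb := (basisMonomials (Fin 2) ℂ).constr_basis ℂ
              (fun m => sNorm (k + l) (m 0) (m 1))
              (Finsupp.single 0 (i + k) + Finsupp.single 1 (j + l))
            rw [coe_basisMonomials] at hb
            rw [sNormMap, hb]
            simp
          rw [e]
          exact sMon_sub_sNorm_mem p q i j k l hw
        · rw [iterate_D_sMon_eq D hx hy hu hv _ _ _ _ _ rfl, aeval_monomial,
            Finsupp.prod_fintype _ _ (by simp)]
          simp
    | zero => exact ⟨0, by simp, by simp⟩
    | add a b _ _ ha hb =>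
      obtain ⟨f, hf, hf'⟩ := ha
      obtain ⟨g, hg, hg'⟩ := hb
      refine ⟨f + g, ?_, by rw [map_add, map_add, hf', hg', smul_add]⟩
      rw [map_add, add_sub_add_comm]
      exact add_mem hf hg
    | smul r a _ ha =>
      obtain ⟨f, hf, hf'⟩ := ha
      refine ⟨r • f, ?_, by rw [map_smul, map_smul, hf', smul_comm]⟩
      rw [map_smul, ← smul_sub]
      exact Submodule.smul_mem _ _ hf
  obtain ⟨g, hg, hg'⟩ := key
  rw [h0] at hg'
  have hg0 : g = 0 := by
    apply aeval_xy_injective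
    rw [map_zero]
    exact (smul_eq_zero.1 hg'.symm).resolve_left (by exact_mod_cast N.factorial_ne_zero)
  simpa [hg0] using hg

lemma mem_Gpq_of_iterate_succ_eq_zero (D : Derivation ℂ SL2R SL2R)
    (hx : D sx = 0) (hy : D sy = 0) (hu : D su = sx) (hv : D sv = sy)
    {p q ν : ℕ} {c : SL2R} (h0 : ((D : SL2R →ₗ[ℂ] SL2R) ^ (ν + 1)) c = 0) (n : ℕ)
    (hc : c ∈ Gpq p q (ν + 1 + n)) : c ∈ Gpq p q (ν + 1) := by
  induction n with
  | zero => exact hc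
  | succ n ih =>
    refine ih (mem_Gpq_of_iterate_eq_zero D hx hy hu hv hc ?_)
    rw [add_comm, pow_add, Module.End.mul_apply, h0, map_zero]

/-- For coprime positive integers `p, q` and every `ν`, the set
`m_ν(B(p,q)) = D^ν(B(p,q) ∩ ker D^{ν+1})` equals the ℂ-linear span of the monomials
`x^α y^β` with `pα + qβ ≥ (p+q)ν`. -/
theorem stmt16 (p q : ℕ) (hp : 0 < p) (hq : 0 < q) (hpq : Nat.Coprime p q)
    (D : Derivation ℂ SL2R SL2R)
    (hx : D sx = 0) (hy : D sy = 0) (hu : D su = sx) (hv : D sv = sy) (ν : ℕ) :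
    {s : SL2R | ∃ c ∈ Bpq p q, (⇑D)^[ν + 1] c = 0 ∧ (⇑D)^[ν] c = s} =
      ↑(Submodule.span ℂ {a : SL2R | ∃ α β : ℕ,
          (p + q) * ν ≤ p * α + q * β ∧ a = sx ^ α * sy ^ β}) := by
  ext s
  simp only [Set.mem_ofPred_eq, SetLike.mem_coe, iterate_D_eq]
  constructor
  · rintro ⟨c, hc, h0, rfl⟩
    obtain ⟨N, hN⟩ := exists_mem_Gpq hc
    have hG : c ∈ Gpq p q (ν + 1) :=
      mem_Gpq_of_iterate_succ_eq_zero D hx hy hu hv h0 N (Gpq_mono p q (by omega) hN)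
    clear h0 hN hc
    induction hG using Submodule.span_induction with
    | mem a ha =>
      obtain ⟨i, j, k, l, hw, hd, rfl⟩ := ha
      rcases Nat.lt_succ_iff_lt_or_eq.1 hd with hlt | rfl
      · rw [iterate_D_sMon_lt D hx hy hu hv ν _ _ _ _ hlt]
        exact zero_mem _
      · rw [iterate_D_sMon_eq D hx hy hu hv _ _ _ _ _ rfl]
        refine Submodule.smul_mem _ _ (Submodule.subset_span ⟨i + k, j + l, ?_, rfl⟩)
        zify
        linarith
    | zero => rw [map_zero]; exact zero_mem _
    | add a b _ _ ha hb => rw [map_add]; exact add_mem ha hb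
    | smul r a _ ha => rw [map_smul]; exact Submodule.smul_mem _ _ ha
  · intro hs
    induction hs using Submodule.span_induction with
    | mem a ha =>
      obtain ⟨α, β, hw, rfl⟩ := ha
      have hν : ν ≤ α + β := by
        by_contra! hlt
        have h1 : (p + q) * (α + β) < (p + q) * ν := Nat.mul_lt_mul_of_pos_left hlt (by omega)
        nlinarith [Nat.zero_le (p * β), Nat.zero_le (q * α)]
      obtain ⟨i, j, k, l, rfl, rfl, rfl⟩ : ∃ i j k l, α = i + k ∧ β = j + l ∧ ν = k + l :=
        ⟨α - min α ν, β - (ν - min α ν), min α ν, ν - min α ν, by omega, by omega, by omega⟩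
      refine ⟨((k + l).factorial : ℂ)⁻¹ • sMon i j k l, Submodule.smul_mem _ _
        (Submodule.subset_span ⟨i, j, k, l, ?_, rfl⟩), ?_, ?_⟩
      · zify at hw
        linarith
      · rw [map_smul, iterate_D_sMon_lt D hx hy hu hv _ _ _ _ _ (Nat.lt_succ_self _), smul_zero]
      · rw [map_smul, iterate_D_sMon_eq D hx hy hu hv _ _ _ _ _ rfl, smul_smul,
          inv_mul_cancel₀ (by exact_mod_cast (k + l).factorial_ne_zero), one_smul]
    | zero => exact ⟨0, zero_mem _, map_zero _, map_zero _⟩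
    | add a b _ _ ha hb =>
      obtain ⟨c, hc, hc0, rfl⟩ := ha
      obtain ⟨d, hd, hd0, rfl⟩ := hb
      exact ⟨c + d, add_mem hc hd, by rw [map_add, hc0, hd0, add_zero], map_add _ _ _⟩
    | smul r a _ ha =>
      obtain ⟨c, hc, hc0, rfl⟩ := ha
      exact ⟨r • c, Submodule.smul_mem _ _ hc, by rw [map_smul, hc0, smul_zero], map_smul _ _ _⟩

end
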